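/- Let T be a triangulated category with a semiorthogonal decomposition T = ⟨T₁, T₂⟩, and let T₁^{≤0} and T₂^{≤0} be t-structures on T₁ and T₂ respectively that are compatible in T, so that T^{≤0} := T₂^{≤0} * (T₁^{≤0}[1]) is a t-structure on T. If T₁^{≤0} and T₂^{≤0} are both non-degenerate, then T^{≤0} is a non-degenerate t-structure on T. -/

import Mathlib

open CategoryTheory Category Limits Pretriangulated

namespace Paper

universe v u

variable {C : Type u} [Category.{v} C] [HasZeroObject C] [Preadditive C]
  [HasShift C ℤ] [∀ n : ℤ, (shiftFunctor C n).Additive] [Pretriangulated C]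

/-- The right orthogonal of a set of objects: objects receiving only zero maps. -/
def rOrth (S : Set C) : Set C := {Y | ∀ X ∈ S, ∀ f : X ⟶ Y, f = 0}

/-- Shift of a set of objects by `n` (closed under isomorphism). -/
def shSet (S : Set C) (n : ℤ) : Set C := {Y | ∃ X ∈ S, Nonempty (Y ≅ X⟦n⟧)}

/-- The `*` operation on sets of objects of a triangulated category. -/
def star (X Y : Set C) : Set C :=
  {Z | ∃ (A : C) (_ : A ∈ X) (B : C) (_ : B ∈ Y) (f : A ⟶ Z) (g : Z ⟶ B)
    (h : B ⟶ A⟦(1 : ℤ)⟧), Triangle.mk f g h ∈ distTriang C}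

/-- A strictly full triangulated subcategory, encoded as a set of objects. -/
structure IsTriangulatedSub (S : Set C) : Prop where
  zero : ∀ X : C, IsZero X → X ∈ S
  isoClosed : ∀ {X Y : C}, (X ≅ Y) → X ∈ S → Y ∈ S
  shift : ∀ (n : ℤ), ∀ X ∈ S, X⟦n⟧ ∈ S
  ext₂ : ∀ T ∈ distTriang C, T.obj₁ ∈ S → T.obj₃ ∈ S → T.obj₂ ∈ S

/-- A t-structure on the full triangulated subcategory `S ⊆ C`, given by its aisle
`le` (playing the role of `S^{≤ 0}`).  The coaisle `S^{≥ 1}` is `S ∩ rOrth le`. -/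
structure IsTStructureOn (S le : Set C) : Prop where
  subset : le ⊆ S
  isoClosed : ∀ {X Y : C}, (X ≅ Y) → X ∈ le → Y ∈ le
  shift : ∀ X ∈ le, X⟦(1 : ℤ)⟧ ∈ le
  exists_triangle : ∀ E ∈ S, ∃ (A B : C) (_ : A ∈ le) (_ : B ∈ S ∩ rOrth le)
    (f : A ⟶ E) (g : E ⟶ B) (h : B ⟶ A⟦(1 : ℤ)⟧), Triangle.mk f g h ∈ distTriang C

/-- `S^{≤ i} := S^{≤ 0}[-i]`. -/
def leN (le : Set C) (i : ℤ) : Set C := shSet le (-i)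

/-- `S^{≥ j} := S^{≥ 1}[-j+1]`. -/
def geN (S le : Set C) (j : ℤ) : Set C := shSet (S ∩ rOrth le) (1 - j)

/-- The heart `S^{≤ 0} ∩ S^{≥ 0}` of a t-structure on `S`. -/
def heartOn (S le : Set C) : Set C := leN le 0 ∩ geN S le 0

/-- Boundedness of a t-structure on `S`. -/
def IsBoundedOn (S le : Set C) : Prop := ∀ E ∈ S, ∃ i j : ℤ, E ∈ leN le i ∧ E ∈ geN S le j

/-- Non-degeneracy of a t-structure on `S`. -/
def IsNonDegenerateOn (S le : Set C) : Prop :=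
  (∀ E : C, (∀ i : ℤ, E ∈ leN le i) → IsZero E) ∧
  (∀ E : C, (∀ j : ℤ, E ∈ geN S le j) → IsZero E)

/-- A semiorthogonal decomposition `C = ⟨S₁, S₂⟩`. -/
structure IsSOD (S₁ S₂ : Set C) : Prop where
  sub₁ : IsTriangulatedSub S₁
  sub₂ : IsTriangulatedSub S₂
  orth : ∀ X ∈ S₂, ∀ Y ∈ S₁, ∀ f : X ⟶ Y, f = 0
  exists_triangle : ∀ E : C, ∃ (A B : C) (_ : A ∈ S₂) (_ : B ∈ S₁)
    (f : A ⟶ E) (g : E ⟶ B) (h : B ⟶ A⟦(1 : ℤ)⟧), Triangle.mk f g h ∈ distTriang C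

/-- Compatibility of t-structures `le₁` on `S₁` and `le₂` on `S₂` in `C`:
`Hom(S₁^{≤0}, S₂^{≥1}) = 0`. -/
def Compatible (S₂ le₁ le₂ : Set C) : Prop :=
  ∀ X ∈ le₁, ∀ Y ∈ S₂ ∩ rOrth le₂, ∀ f : X ⟶ Y, f = 0

/-- The glued aisle `T^{≤0} := T₂^{≤0} * (T₁^{≤0}[1])`. -/
def glued (le₁ le₂ : Set C) : Set C := star le₂ (shSet le₁ 1)

/-!
Only the axioms of a pretriangulated category are available, so the truncation triangle of `E` is
built without the octahedral axiom: lift the connecting map of the decomposition triangle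
`E₂ ⟶ E ⟶ E₁ ⟶ E₂⟦1⟧` to the truncations of `E₂` and `E₁` (this is where compatibility enters), take
the resulting extension `A`, complete to a morphism of triangles, and let `B` be any cone of
`A ⟶ E`.  Two four lemmas for `Hom(X, -)` show that `B` lies in the coaisle.

For non-degeneracy, if all shifts of `E` lie in the aisle, uniqueness of the decomposition triangle
puts all shifts of `E₂` and of `E₁` in the respective aisles; if all shifts of `E` lie in the
coaisle, then first `E₂` and afterwards `E ≅ E₁` has all its shifts in the respective coaisle.
-/

open scoped ZeroObject

/-- A replete subcategory, i.e. one that is closed under isomorphism, encoded by its objects. -/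
def IsReplete (S : Set C) : Prop := ∀ ⦃X Y : C⦄, (X ≅ Y) → X ∈ S → Y ∈ S

omit [HasZeroObject C] [Preadditive C] [HasShift C ℤ]
  [∀ n : ℤ, (shiftFunctor C n).Additive] [Pretriangulated C] in
lemma IsReplete.inter {S U : Set C} (hS : IsReplete S) (hU : IsReplete U) : IsReplete (S ∩ U) :=
  fun _ _ e h => ⟨hS e h.1, hU e h.2⟩

lemma IsTriangulatedSub.isReplete {S : Set C} (hS : IsTriangulatedSub S) : IsReplete S :=
  fun _ _ e => hS.isoClosed e

lemma IsTStructureOn.isReplete {S le : Set C} (h : IsTStructureOn S le) : IsReplete le :=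
  fun _ _ e => h.isoClosed e

section ShiftOfSet

omit [HasZeroObject C] [Preadditive C] [∀ n : ℤ, (shiftFunctor C n).Additive] [Pretriangulated C]

variable {S : Set C}

lemma shSet_isReplete (S : Set C) (n : ℤ) : IsReplete (shSet S n) := by
  rintro X Y e ⟨Z, hZ, ⟨e'⟩⟩
  exact ⟨Z, hZ, ⟨e.symm ≪≫ e'⟩⟩

lemma shift_mem_shSet {X : C} (hX : X ∈ S) (n : ℤ) : X⟦n⟧ ∈ shSet S n :=
  ⟨X, hX, ⟨Iso.refl _⟩⟩

lemma shSet_subset_of_isReplete {S' : Set C} (hS' : IsReplete S') {n : ℤ}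
    (h : ∀ X ∈ S, X⟦n⟧ ∈ S') : shSet S n ⊆ S' := by
  rintro Y ⟨X, hX, ⟨e⟩⟩
  exact hS' e.symm (h X hX)

lemma mem_shSet_iff (hS : IsReplete S) {X : C} {n : ℤ} : X ∈ shSet S n ↔ X⟦-n⟧ ∈ S := by
  constructor
  · rintro ⟨Y, hY, ⟨e⟩⟩
    exact hS ((shiftFunctor C (-n)).mapIso e ≪≫ shiftShiftNeg Y n).symm hY
  · exact fun h => ⟨_, h, ⟨(shiftNegShift X n).symm⟩⟩

lemma mem_leN_iff (hS : IsReplete S) {E : C} {i : ℤ} : E ∈ leN S i ↔ E⟦i⟧ ∈ S := by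
  rw [leN, mem_shSet_iff hS, neg_neg]

end ShiftOfSet

section RightOrthogonal

omit [HasZeroObject C] [Pretriangulated C]

variable {S S' : Set C}

omit [HasShift C ℤ] [∀ n : ℤ, (shiftFunctor C n).Additive] in
lemma rOrth_anti (h : S ⊆ S') : rOrth S' ⊆ rOrth S :=
  fun _ hY X hX => hY X (h hX)

omit [HasShift C ℤ] [∀ n : ℤ, (shiftFunctor C n).Additive] in
lemma rOrth_isReplete (S : Set C) : IsReplete (rOrth S) := by
  intro Y Z e hY X hX f
  rw [← cancel_mono e.inv, hY X hX (f ≫ e.inv), zero_comp]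

lemma shift_mem_rOrth_shSet_iff {Y : C} {n : ℤ} : Y⟦n⟧ ∈ rOrth (shSet S n) ↔ Y ∈ rOrth S := by
  constructor
  · intro h X hX f
    apply (shiftFunctor C n).map_injective
    rw [h _ (shift_mem_shSet hX n) (f⟦n⟧'), Functor.map_zero]
  · rintro h X ⟨Z, hZ, ⟨e⟩⟩ f
    obtain ⟨g, hg⟩ := (shiftFunctor C n).map_surjective (e.inv ≫ f)
    rw [← cancel_epi e.inv, ← hg, h Z hZ g, Functor.map_zero, comp_zero]

lemma mem_rOrth_shSet_iff {Y : C} {n : ℤ} : Y ∈ rOrth (shSet S n) ↔ Y⟦-n⟧ ∈ rOrth S := by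
  rw [← shift_mem_rOrth_shSet_iff (S := S) (Y := Y⟦-n⟧) (n := n)]
  exact ⟨rOrth_isReplete _ (shiftNegShift Y n).symm, rOrth_isReplete _ (shiftNegShift Y n)⟩

end RightOrthogonal

section NonDegenerate

omit [HasZeroObject C] [∀ n : ℤ, (shiftFunctor C n).Additive] [Pretriangulated C]

variable {S le : Set C}

lemma mem_geN_iff (hS : IsReplete S) {E : C} {j : ℤ} :
    E ∈ geN S le j ↔ E⟦j - 1⟧ ∈ S ∩ rOrth le := by
  rw [geN, mem_shSet_iff (hS.inter (rOrth_isReplete le)), neg_sub]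

lemma isNonDegenerateOn_iff (hS : IsReplete S) (hle : IsReplete le) :
    IsNonDegenerateOn S le ↔ (∀ E : C, (∀ n : ℤ, E⟦n⟧ ∈ le) → IsZero E) ∧
      (∀ E : C, (∀ n : ℤ, E⟦n⟧ ∈ S ∩ rOrth le) → IsZero E) := by
  have forall_geN (E : C) : (∀ j, E ∈ geN S le j) ↔ ∀ n : ℤ, E⟦n⟧ ∈ S ∩ rOrth le := by
    simp only [mem_geN_iff hS]
    exact ⟨fun h n => by simpa using h (n + 1), fun h j => h (j - 1)⟩
  simp only [IsNonDegenerateOn, mem_leN_iff hle, forall_geN]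

end NonDegenerate

section Star

variable {S S' U U' : Set C}

lemma star_mono (hS : S ⊆ S') (hU : U ⊆ U') : star S U ⊆ star S' U' := by
  rintro Z ⟨A, hA, B, hB, hZ⟩
  exact ⟨A, hS hA, B, hU hB, hZ⟩

lemma star_isReplete (S U : Set C) : IsReplete (star S U) := by
  rintro Z Z' e ⟨A, hA, B, hB, f, g, h, hT⟩
  refine ⟨A, hA, B, hB, f ≫ e.hom, e.inv ≫ g, h, isomorphic_distinguished _ hT _ ?_⟩
  refine Triangle.isoMk _ _ (Iso.refl A) e.symm (Iso.refl B) ?_ ?_ ?_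
  · change (f ≫ e.hom) ≫ e.inv = 𝟙 A ≫ f
    simp
  · change (e.inv ≫ g) ≫ 𝟙 B = e.inv ≫ g
    simp
  · change h ≫ (𝟙 A)⟦(1 : ℤ)⟧' = 𝟙 B ≫ h
    simp

lemma shift_mem_star {Z : C} (hZ : Z ∈ star S U) (n : ℤ) :
    Z⟦n⟧ ∈ star (shSet S n) (shSet U n) := by
  obtain ⟨A, hA, B, hB, f, g, h, hT⟩ := hZ
  exact ⟨_, shift_mem_shSet hA n, _, shift_mem_shSet hB n, _, _, _,
    Triangle.shift_distinguished _ hT n⟩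

lemma subset_star_left (hU : (0 : C) ∈ U) : S ⊆ star S U :=
  fun X hX => ⟨X, hX, 0, hU, _, _, _, contractible_distinguished X⟩

lemma subset_star_right (hS : (0 : C) ∈ S) : U ⊆ star S U :=
  fun X hX => ⟨0, hS, X, hX, _, _, _, contractible_distinguished₁ X⟩

lemma obj₂_mem_rOrth {T : Triangle C} (hT : T ∈ distTriang C) (h₁ : T.obj₁ ∈ rOrth S)
    (h₃ : T.obj₃ ∈ rOrth S) : T.obj₂ ∈ rOrth S := by
  intro X hX f
  obtain ⟨g, rfl⟩ := T.coyoneda_exact₂ hT f (h₃ X hX _)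
  rw [h₁ X hX g, zero_comp]

lemma rOrth_inter_rOrth_subset_rOrth_star (S U : Set C) :
    rOrth S ∩ rOrth U ⊆ rOrth (star S U) := by
  rintro Y ⟨hS, hU⟩ Z ⟨A, hA, B, hB, f, g, h, hT⟩ k
  obtain ⟨l, rfl⟩ := Triangle.yoneda_exact₂ _ hT k (hS A hA _)
  exact (congrArg _ (hU B hB l)).trans comp_zero

end Star

section FourLemmas

open Preadditive

variable {T T' : Triangle C} {X : C}

lemma exact_rightComp_mor₁_mor₂ (hT : T ∈ distTriang C) (X : C) :
    Function.Exact (rightComp X T.mor₁) (rightComp X T.mor₂) := by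
  intro f
  constructor
  · intro hf
    obtain ⟨g, hg⟩ := T.coyoneda_exact₂ hT f hf
    exact ⟨g, hg.symm⟩
  · rintro ⟨g, rfl⟩
    exact (assoc _ _ _).trans (by rw [comp_distTriang_mor_zero₁₂ T hT, comp_zero])

lemma exact_rightComp_mor₂_mor₃ (hT : T ∈ distTriang C) (X : C) :
    Function.Exact (rightComp X T.mor₂) (rightComp X T.mor₃) :=
  exact_rightComp_mor₁_mor₂ (rot_of_distTriang T hT) X

lemma exact_rightComp_mor₃_shift_mor₁ (hT : T ∈ distTriang C) (X : C) :
    Function.Exact (rightComp X T.mor₃) (rightComp X (T.mor₁⟦(1 : ℤ)⟧')) := by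
  intro f
  refine Iff.trans ?_ (exact_rightComp_mor₂_mor₃ (rot_of_distTriang T hT) X f)
  change f ≫ T.mor₁⟦(1 : ℤ)⟧' = 0 ↔ f ≫ (-T.mor₁⟦(1 : ℤ)⟧') = 0
  rw [comp_neg, neg_eq_zero]

lemma exact_rightComp_shift_mor₁_shift_mor₂ (hT : T ∈ distTriang C) (X : C) :
    Function.Exact (rightComp X (T.mor₁⟦(1 : ℤ)⟧')) (rightComp X (T.mor₂⟦(1 : ℤ)⟧')) := by
  intro f
  refine (exact_rightComp_mor₃_shift_mor₁ (rot_of_distTriang T hT) X f).trans ?_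
  change (∃ g, g ≫ (-T.mor₁⟦(1 : ℤ)⟧') = f) ↔ ∃ g, g ≫ T.mor₁⟦(1 : ℤ)⟧' = f
  exact (Equiv.neg _).exists_congr fun g => by simp

omit [HasZeroObject C] [HasShift C ℤ] [∀ n : ℤ, (shiftFunctor C n).Additive] [Pretriangulated C] in
lemma rightComp_comp_eq_of_comm {A B B' D : C} {f : A ⟶ B} {g : B ⟶ D} {f' : A ⟶ B'} {g' : B' ⟶ D}
    (h : f ≫ g = f' ≫ g') :
    (rightComp X g).comp (rightComp X f) = (rightComp X g').comp (rightComp X f') := by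
  ext x
  simp [rightComp, h]

lemma surjective_rightComp_hom₂ (hT : T ∈ distTriang C) (hT' : T' ∈ distTriang C) (φ : T ⟶ T')
    (h₁ : Function.Surjective (rightComp X φ.hom₁))
    (h₃ : Function.Surjective (rightComp X φ.hom₃))
    (h₄ : Function.Injective (rightComp X (φ.hom₁⟦(1 : ℤ)⟧'))) :
    Function.Surjective (rightComp X φ.hom₂) :=
  AddMonoidHom.surjective_of_surjective_of_surjective_of_injective
    (rightComp X T.mor₁) (rightComp X T.mor₂) (rightComp X T.mor₃)
    (rightComp X T'.mor₁) (rightComp X T'.mor₂) (rightComp X T'.mor₃) _ _ _ _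
    (rightComp_comp_eq_of_comm φ.comm₁.symm) (rightComp_comp_eq_of_comm φ.comm₂.symm)
    (rightComp_comp_eq_of_comm φ.comm₃.symm) (exact_rightComp_mor₂_mor₃ hT X)
    (exact_rightComp_mor₁_mor₂ hT' X) (exact_rightComp_mor₂_mor₃ hT' X) h₁ h₃ h₄

lemma injective_rightComp_hom₃ (hT : T ∈ distTriang C) (hT' : T' ∈ distTriang C) (φ : T ⟶ T')
    (h₁ : Function.Surjective (rightComp X φ.hom₁))
    (h₂ : Function.Injective (rightComp X φ.hom₂))
    (h₄ : Function.Injective (rightComp X (φ.hom₁⟦(1 : ℤ)⟧'))) :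
    Function.Injective (rightComp X φ.hom₃) :=
  AddMonoidHom.injective_of_surjective_of_injective_of_injective
    (rightComp X T.mor₁) (rightComp X T.mor₂) (rightComp X T.mor₃)
    (rightComp X T'.mor₁) (rightComp X T'.mor₂) (rightComp X T'.mor₃) _ _ _ _
    (rightComp_comp_eq_of_comm φ.comm₁.symm) (rightComp_comp_eq_of_comm φ.comm₂.symm)
    (rightComp_comp_eq_of_comm φ.comm₃.symm) (exact_rightComp_mor₁_mor₂ hT X)
    (exact_rightComp_mor₂_mor₃ hT X) (exact_rightComp_mor₁_mor₂ hT' X) h₁ h₂ h₄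

lemma injective_rightComp_shift_hom₂ (hT : T ∈ distTriang C) (hT' : T' ∈ distTriang C)
    (φ : T ⟶ T') (h₁ : Function.Injective (rightComp X (φ.hom₁⟦(1 : ℤ)⟧')))
    (h₃ : Function.Surjective (rightComp X φ.hom₃))
    (h₃' : Function.Injective (rightComp X (φ.hom₃⟦(1 : ℤ)⟧'))) :
    Function.Injective (rightComp X (φ.hom₂⟦(1 : ℤ)⟧')) :=
  injective_rightComp_hom₃ (rot_of_distTriang _ (rot_of_distTriang T hT))
    (rot_of_distTriang _ (rot_of_distTriang T' hT')) ((rotate C).map ((rotate C).map φ)) h₃ h₁ h₃'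

lemma obj₃_mem_rOrth_iff {S : Set C} (hT : T ∈ distTriang C) :
    T.obj₃ ∈ rOrth S ↔ ∀ X ∈ S, Function.Surjective (rightComp X T.mor₁) ∧
      Function.Injective (rightComp X (T.mor₁⟦(1 : ℤ)⟧')) := by
  refine forall₂_congr fun X _ => ⟨fun h => ⟨fun f => ?_, ?_⟩, fun ⟨hsurj, hinj⟩ f => ?_⟩
  · exact (exact_rightComp_mor₁_mor₂ hT X f).1 (h _)
  · rw [injective_iff_map_eq_zero]
    intro f hf
    obtain ⟨g, rfl⟩ := (exact_rightComp_mor₃_shift_mor₁ hT X f).1 hf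
    rw [h g, map_zero]
  · have hf : rightComp X T.mor₃ f = 0 := by
      apply (injective_iff_map_eq_zero _).1 hinj
      exact (exact_rightComp_mor₃_shift_mor₁ hT X).apply_apply_eq_zero f
    obtain ⟨g, rfl⟩ := (exact_rightComp_mor₂_mor₃ hT X f).1 hf
    obtain ⟨k, rfl⟩ := hsurj g
    exact (exact_rightComp_mor₁_mor₂ hT X).apply_apply_eq_zero k

/-- Replaces the 3×3 lemma, whose proof needs the octahedral axiom. -/
lemma cone_hom₂_mem_rOrth {S : Set C} (hT : T ∈ distTriang C) (hT' : T' ∈ distTriang C)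
    (φ : T ⟶ T') {B₁ B₂ B₃ : C}
    {g₁ : T'.obj₁ ⟶ B₁} {k₁ : B₁ ⟶ T.obj₁⟦(1 : ℤ)⟧} (h₁ : Triangle.mk φ.hom₁ g₁ k₁ ∈ distTriang C)
    {g₂ : T'.obj₂ ⟶ B₂} {k₂ : B₂ ⟶ T.obj₂⟦(1 : ℤ)⟧} (h₂ : Triangle.mk φ.hom₂ g₂ k₂ ∈ distTriang C)
    {g₃ : T'.obj₃ ⟶ B₃} {k₃ : B₃ ⟶ T.obj₃⟦(1 : ℤ)⟧} (h₃ : Triangle.mk φ.hom₃ g₃ k₃ ∈ distTriang C)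
    (hB₁ : B₁ ∈ rOrth S) (hB₃ : B₃ ∈ rOrth S) : B₂ ∈ rOrth S := by
  refine (obj₃_mem_rOrth_iff h₂).2 fun X hX => ?_
  obtain ⟨surj₁, inj₁⟩ := (obj₃_mem_rOrth_iff h₁).1 hB₁ X hX
  obtain ⟨surj₃, inj₃⟩ := (obj₃_mem_rOrth_iff h₃).1 hB₃ X hX
  exact ⟨surjective_rightComp_hom₂ hT hT' φ surj₁ surj₃ inj₁,
    injective_rightComp_shift_hom₂ hT hT' φ inj₁ surj₃ inj₃⟩

end FourLemmas

section TStructure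

variable {S le : Set C}

lemma IsTStructureOn.mem_star (h : IsTStructureOn S le) {E : C} (hE : E ∈ S) :
    E ∈ star le (S ∩ rOrth le) := by
  obtain ⟨A, B, hA, hB, hT⟩ := h.exists_triangle E hE
  exact ⟨A, hA, B, hB, hT⟩

lemma IsTStructureOn.shSet_one_subset (h : IsTStructureOn S le) : shSet le 1 ⊆ le :=
  shSet_subset_of_isReplete h.isReplete h.shift

lemma IsTStructureOn.mem_of_isZero (h : IsTStructureOn S le) {X : C} (hX : IsZero X)
    (hXS : X ∈ S) : X ∈ le := by
  obtain ⟨A, B, hA, hB, f, g, k, hT⟩ := h.exists_triangle X hXS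
  have : IsIso k := (Triangle.isZero₂_iff_isIso₃ _ hT).1 hX
  have hB₀ : IsZero B := by
    rw [IsZero.iff_id_eq_zero, ← IsIso.hom_inv_id k, hB.2 _ (h.shift A hA) (inv k), comp_zero]
  have : IsIso f := (Triangle.isZero₃_iff_isIso₁ _ hT).1 hB₀
  exact h.isoClosed (asIso f) hA

lemma shSet_inter_rOrth (hS : IsTriangulatedSub S) (le : Set C) (n : ℤ) :
    shSet (S ∩ rOrth le) n = S ∩ rOrth (shSet le n) := by
  apply subset_antisymm
  · rintro Y ⟨X, ⟨hXS, hX⟩, ⟨e⟩⟩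
    exact ⟨hS.isoClosed e.symm (hS.shift n X hXS),
      rOrth_isReplete _ e.symm (shift_mem_rOrth_shSet_iff.2 hX)⟩
  · rintro Y ⟨hYS, hY⟩
    exact ⟨_, ⟨hS.shift (-n) Y hYS, mem_rOrth_shSet_iff.1 hY⟩, ⟨(shiftNegShift Y n).symm⟩⟩

lemma IsTStructureOn.shSet (hS : IsTriangulatedSub S) (h : IsTStructureOn S le) (n : ℤ) :
    IsTStructureOn S (shSet le n) where
  subset := shSet_subset_of_isReplete hS.isReplete fun X hX => hS.shift n X (h.subset hX)
  isoClosed e hX := shSet_isReplete le n e hX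
  shift := by
    rintro X ⟨Y, hY, ⟨e⟩⟩
    exact ⟨_, h.shift Y hY, ⟨(shiftFunctor C (1 : ℤ)).mapIso e ≪≫ shiftComm Y n 1⟩⟩
  exists_triangle E hE := by
    have hE' := shift_mem_star (h.mem_star (hS.shift (-n) E hE)) n
    rw [shSet_inter_rOrth hS] at hE'
    obtain ⟨A, hA, B, hB, hT⟩ := star_isReplete _ _ (shiftNegShift E n) hE'
    exact ⟨A, B, hA, hB, hT⟩

lemma IsNonDegenerateOn.shSet (hn : IsNonDegenerateOn S le) (hS : IsTriangulatedSub S)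
    (hle : IsReplete le) (m : ℤ) : IsNonDegenerateOn S (shSet le m) := by
  have shift_mem {U : Set C} (hU : IsReplete U) {E : C}
      (hE : ∀ n : ℤ, E⟦n⟧ ∈ Paper.shSet U m) (n : ℤ) : E⟦n⟧ ∈ U :=
    hU ((shiftFunctorAdd' C (n + m) (-m) n (by lia)).app E).symm
      ((mem_shSet_iff hU).1 (hE (n + m)))
  rw [isNonDegenerateOn_iff hS.isReplete hle] at hn
  rw [isNonDegenerateOn_iff hS.isReplete (shSet_isReplete le m), ← shSet_inter_rOrth hS]
  exact ⟨fun E hE => hn.1 E (shift_mem hle hE),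
    fun E hE => hn.2 E (shift_mem (hS.isReplete.inter (rOrth_isReplete le)) hE)⟩

end TStructure

section Gluing

variable {S₁ S₂ le₁ le₂ : Set C}

lemma IsSOD.subset_rOrth (hSOD : IsSOD S₁ S₂) : S₁ ⊆ rOrth S₂ :=
  fun Y hY X hX => hSOD.orth X hX Y hY

/-- The t-structure with aisle `S₂` and coaisle `S₁`, all of whose truncation triangles are
decomposition triangles. It gives access to the uniqueness of the latter. -/
def IsSOD.tStructure (hSOD : IsSOD S₁ S₂) : Triangulated.TStructure C where
  le _ := (· ∈ S₂)
  ge _ := (· ∈ S₁)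
  le_isClosedUnderIsomorphisms _ := ⟨hSOD.sub₂.isoClosed⟩
  ge_isClosedUnderIsomorphisms _ := ⟨hSOD.sub₁.isoClosed⟩
  le_shift _ a _ _ := hSOD.sub₂.shift a
  ge_shift _ a _ _ := hSOD.sub₁.shift a
  zero' X Y f hX hY := hSOD.orth X hX Y hY f
  le_zero_le := le_rfl
  ge_one_le := le_rfl
  exists_triangle_zero_one := hSOD.exists_triangle

lemma IsSOD.exists_distTriang (hSOD : IsSOD S₁ S₂) (E : C) :
    ∃ T ∈ distTriang C, T.obj₁ ∈ S₂ ∧ T.obj₂ = E ∧ T.obj₃ ∈ S₁ := by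
  obtain ⟨A, B, hA, hB, f, g, h, hT⟩ := hSOD.exists_triangle E
  exact ⟨_, hT, hA, rfl, hB⟩

lemma IsSOD.nonempty_iso (hSOD : IsSOD S₁ S₂) {T T' : Triangle C} (hT : T ∈ distTriang C)
    (hT' : T' ∈ distTriang C) (h₁ : T.obj₁ ∈ S₂) (h₁' : T'.obj₁ ∈ S₂) (h₃ : T.obj₃ ∈ S₁)
    (h₃' : T'.obj₃ ∈ S₁) (e : T.obj₂ ≅ T'.obj₂) : Nonempty (T ≅ T') := by
  obtain ⟨e', -⟩ := hSOD.tStructure.triangle_iso_exists hT hT' e 0 1 ⟨h₁⟩ ⟨h₃⟩ ⟨h₁'⟩ ⟨h₃'⟩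
  exact ⟨e'⟩

lemma IsSOD.mem_and_mem_of_mem_star (hSOD : IsSOD S₁ S₂) {U₁ U₂ : Set C} (hU₁ : IsReplete U₁)
    (hU₂ : IsReplete U₂) (hUS₁ : U₁ ⊆ S₁) (hUS₂ : U₂ ⊆ S₂) {T : Triangle C}
    (hT : T ∈ distTriang C) (h₁ : T.obj₁ ∈ S₂) (h₃ : T.obj₃ ∈ S₁) (h₂ : T.obj₂ ∈ star U₂ U₁) :
    T.obj₁ ∈ U₂ ∧ T.obj₃ ∈ U₁ := by
  obtain ⟨A, hA, B, hB, f, g, h, hT'⟩ := h₂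
  obtain ⟨e⟩ := hSOD.nonempty_iso hT' hT (hUS₂ hA) h₁ (hUS₁ hB) h₃ (Iso.refl _)
  exact ⟨hU₂ (Triangle.π₁.mapIso e) hA, hU₁ (Triangle.π₃.mapIso e) hB⟩

lemma IsSOD.obj₁_mem_rOrth (hSOD : IsSOD S₁ S₂) {U : Set C} (hU : U ⊆ S₂) {T : Triangle C}
    (hT : T ∈ distTriang C) (h₃ : T.obj₃ ∈ S₁) (h₂ : T.obj₂ ∈ rOrth U) : T.obj₁ ∈ rOrth U :=
  obj₂_mem_rOrth (inv_rot_of_distTriang T hT)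
    (rOrth_anti hU (hSOD.subset_rOrth (hSOD.sub₁.shift (-1) _ h₃))) h₂

lemma IsSOD.isNonDegenerateOn_star (hSOD : IsSOD S₁ S₂) (h₁ : IsTStructureOn S₁ le₁)
    (h₂ : IsTStructureOn S₂ le₂) (hn₁ : IsNonDegenerateOn S₁ le₁)
    (hn₂ : IsNonDegenerateOn S₂ le₂) : IsNonDegenerateOn Set.univ (star le₂ le₁) := by
  rw [isNonDegenerateOn_iff hSOD.sub₁.isReplete h₁.isReplete] at hn₁
  rw [isNonDegenerateOn_iff hSOD.sub₂.isReplete h₂.isReplete] at hn₂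
  rw [isNonDegenerateOn_iff (S := Set.univ) (fun _ _ _ _ => trivial) (star_isReplete le₂ le₁)]
  refine ⟨fun E hE => ?_, fun E hE => ?_⟩ <;>
    obtain ⟨T, hT, hT₁, rfl, hT₃⟩ := hSOD.exists_distTriang E
  · have mem (n : ℤ) : T.obj₁⟦n⟧ ∈ le₂ ∧ T.obj₃⟦n⟧ ∈ le₁ :=
      hSOD.mem_and_mem_of_mem_star h₁.isReplete h₂.isReplete h₁.subset h₂.subset
        (T.shift_distinguished hT n) (hSOD.sub₂.shift n _ hT₁) (hSOD.sub₁.shift n _ hT₃) (hE n)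
    exact T.isZero₂_of_isZero₁₃ hT (hn₂.1 _ fun n => (mem n).1) (hn₁.1 _ fun n => (mem n).2)
  · have le₁_subset : le₁ ⊆ star le₂ le₁ := subset_star_right <|
      h₂.mem_of_isZero (isZero_zero C) (hSOD.sub₂.zero _ (isZero_zero C))
    have le₂_subset : le₂ ⊆ star le₂ le₁ := subset_star_left <|
      h₁.mem_of_isZero (isZero_zero C) (hSOD.sub₁.zero _ (isZero_zero C))
    have zero₁ : IsZero T.obj₁ := hn₂.2 _ fun n => ⟨hSOD.sub₂.shift n _ hT₁,
      hSOD.obj₁_mem_rOrth h₂.subset (T.shift_distinguished hT n) (hSOD.sub₁.shift n _ hT₃)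
        (rOrth_anti le₂_subset (hE n).2)⟩
    have : IsIso T.mor₂ := (T.isZero₁_iff_isIso₂ hT).1 zero₁
    have zero₃ : IsZero T.obj₃ := hn₁.2 _ fun n => ⟨hSOD.sub₁.shift n _ hT₃,
      rOrth_isReplete _ ((shiftFunctor C n).mapIso (asIso T.mor₂))
        (rOrth_anti le₁_subset (hE n).2)⟩
    exact T.isZero₂_of_isZero₁₃ hT zero₁ zero₃

lemma exists_distTriang_hom {T : Triangle C} (hT : T ∈ distTriang C) {A₁ A₃ : C}
    (f₁ : A₁ ⟶ T.obj₁) (f₃ : A₃ ⟶ T.obj₃) (d : A₃ ⟶ A₁⟦(1 : ℤ)⟧)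
    (hd : d ≫ f₁⟦(1 : ℤ)⟧' = f₃ ≫ T.mor₃) :
    ∃ (A : C) (i : A₁ ⟶ A) (p : A ⟶ A₃) (φ : Triangle.mk i p d ⟶ T),
      Triangle.mk i p d ∈ distTriang C ∧ φ.hom₁ = f₁ ∧ φ.hom₃ = f₃ := by
  obtain ⟨A, i, p, hA⟩ := distinguished_cocone_triangle₂ d
  obtain ⟨f₂, comm₁, comm₂⟩ := complete_distinguished_triangle_morphism₂ _ _ hA hT f₁ f₃ hd
  exact ⟨A, i, p, ⟨f₁, f₂, f₃, comm₁, comm₂, hd⟩, hA, rfl, rfl⟩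

lemma IsSOD.mem_star_rOrth_glued (hSOD : IsSOD S₁ S₂) (h₁ : IsTStructureOn S₁ le₁)
    (h₂ : IsTStructureOn S₂ le₂) (hcomp : Compatible S₂ le₁ le₂) (E : C) :
    E ∈ star (glued le₁ le₂) (rOrth (glued le₁ le₂)) := by
  obtain ⟨T, hT, hT₁, rfl, hT₃⟩ := hSOD.exists_distTriang E
  obtain ⟨A₁, B₁, hA₁, hB₁, f₁, g₁, k₁, hE₁⟩ := (h₁.shSet hSOD.sub₁ 1).exists_triangle _ hT₃
  obtain ⟨A₂, B₂, hA₂, hB₂, f₂, g₂, k₂, hE₂⟩ := h₂.exists_triangle _ hT₁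
  have hB₂_le₁ : B₂ ∈ rOrth le₁ := fun X hX => hcomp X hX B₂ hB₂
  obtain ⟨d, hd⟩ := (exact_rightComp_shift_mor₁_shift_mor₂ hE₂ A₁ (f₁ ≫ T.mor₃)).1
    (shift_mem_rOrth_shSet_iff.2 hB₂_le₁ A₁ hA₁ _)
  obtain ⟨A, i, p, φ, hA, hφ₁, hφ₃⟩ := exists_distTriang_hom hT f₂ f₁ d hd
  rw [← hφ₁] at hE₂
  rw [← hφ₃] at hE₁
  obtain ⟨B, g, k, hB⟩ := distinguished_cocone_triangle φ.hom₂
  refine ⟨A, ⟨A₂, hA₂, A₁, hA₁, i, p, d, hA⟩, B, ?_, φ.hom₂, g, k, hB⟩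
  have hB₁' : B₁ ∈ rOrth le₂ := rOrth_anti h₂.subset (hSOD.subset_rOrth hB₁.1)
  have hB₂' : B₂ ∈ rOrth (shSet le₁ 1) := rOrth_anti h₁.shSet_one_subset hB₂_le₁
  exact cone_hom₂_mem_rOrth hA hT φ hE₂ hB hE₁
    (rOrth_inter_rOrth_subset_rOrth_star _ _ ⟨hB₂.2, hB₂'⟩)
    (rOrth_inter_rOrth_subset_rOrth_star _ _ ⟨hB₁', hB₁.2⟩)

lemma IsSOD.isTStructureOn_glued (hSOD : IsSOD S₁ S₂) (h₁ : IsTStructureOn S₁ le₁)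
    (h₂ : IsTStructureOn S₂ le₂) (hcomp : Compatible S₂ le₁ le₂) :
    IsTStructureOn Set.univ (glued le₁ le₂) where
  subset := Set.subset_univ _
  isoClosed e hX := star_isReplete _ _ e hX
  shift _ hX := star_mono h₂.shSet_one_subset (h₁.shSet hSOD.sub₁ 1).shSet_one_subset
    (shift_mem_star hX 1)
  exists_triangle E _ := by
    obtain ⟨A, hA, B, hB, hT⟩ := hSOD.mem_star_rOrth_glued h₁ h₂ hcomp E
    exact ⟨A, B, hA, ⟨trivial, hB⟩, hT⟩

end Gluing

/-- Theorem 2.7, item 1, non-degeneracy: if the compatible t-structures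
`le₁` and `le₂` are non-degenerate, then the glued t-structure `T₂^{≤0} * (T₁^{≤0}[1])`
is a non-degenerate t-structure on `C`. -/
theorem glued_isNonDegenerate {C : Type u} [Category.{v} C] [HasZeroObject C] [Preadditive C]
    [HasShift C ℤ] [∀ n : ℤ, (shiftFunctor C n).Additive] [Pretriangulated C]
    (S₁ S₂ le₁ le₂ : Set C) (hSOD : IsSOD S₁ S₂)
    (h₁ : IsTStructureOn S₁ le₁) (h₂ : IsTStructureOn S₂ le₂)
    (hcomp : Compatible S₂ le₁ le₂)
    (hn₁ : IsNonDegenerateOn S₁ le₁) (hn₂ : IsNonDegenerateOn S₂ le₂) :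
    IsTStructureOn Set.univ (glued le₁ le₂) ∧ IsNonDegenerateOn Set.univ (glued le₁ le₂) := by
  exact ⟨hSOD.isTStructureOn_glued h₁ h₂ hcomp,
    hSOD.isNonDegenerateOn_star (h₁.shSet hSOD.sub₁ 1) h₂
      (hn₁.shSet hSOD.sub₁ h₁.isReplete 1) hn₂⟩

end Paper
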